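/- arXiv:2112.08042 — 2 statements merged into one kernel-verified Lean document; each statement's English description precedes it below -/
import Mathlib

section
/- For every integer n ≥ 2, the function f_n admits exactly one fixed point α_n in the open interval (0,1) (i.e. exactly one t ∈ (0,1) with f_n(t) = t), and moreover α_n < 1/2. -/
open Real Filter Finset

/-- `f n t = ∑_{k, 0 ≤ 2k ≤ n} C(n,2k)·C(2k,k)·((1−t)/2)^{2k}·t^{n−2k}` -/
noncomputable def f (n : ℕ) (t : ℝ) : ℝ :=
  ∑ k ∈ Finset.range (n / 2 + 1),
    (n.choose (2 * k) : ℝ) * ((2 * k).choose k : ℝ) * ((1 - t) / 2) ^ (2 * k) * t ^ (n - 2 * k)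

/-!
Expanding the binomial and inserting the moments of `cos` over `[0, π]` gives
`f n t = π⁻¹ ∫ (cos x + t (1 - cos x)) ^ n dx`. Hence `f n` is strictly convex when `n` is even, and
its derivative is strictly convex when `n ≥ 3` is odd. Always `f n 1 = 1`, so in the even case
`f n t - t` has at most one zero below `1`; in the odd case `f n 0 = 0` as well, and by Rolle
`f n t - t` has at most one zero strictly between `0` and `1`. A zero below `1 / 2` exists because
`f n t > t` for small `t > 0` (`f n 0 > 0` for `n` even, `(f n)' 0 > 1` for `n` odd), while
`f n (1 / 2) ≤ f 2 (1 / 2) = 3 / 8`.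
-/

open scoped Topology

theorem ne_of_strictConvexOn_of_eq {s : Set ℝ} {g : ℝ → ℝ} (hg : StrictConvexOn ℝ s g)
    {x y z : ℝ} (hx : x ∈ s) (hz : z ∈ s) (hxy : x < y) (hyz : y < z) (h : g x = g y) :
    g y ≠ g z := by
  intro h'
  have hlt := hg.lt_on_openSegment hx hz (hxy.trans hyz).ne (Ioo_subset_openSegment ⟨hxy, hyz⟩)
  rw [h, ← h', max_self] at hlt
  exact hlt.false

theorem ne_of_strictConvexOn_deriv_of_eq {g : ℝ → ℝ} (hg : Continuous g)
    (hg' : StrictConvexOn ℝ Set.univ (deriv g)) {w x y z : ℝ} (hwx : w < x) (hxy : x < y)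
    (hyz : y < z) (h₁ : g w = g x) (h₂ : g x = g y) : g y ≠ g z := by
  intro h₃
  obtain ⟨p, hp, hp₀⟩ := exists_deriv_eq_zero hwx hg.continuousOn h₁
  obtain ⟨q, hq, hq₀⟩ := exists_deriv_eq_zero hxy hg.continuousOn h₂
  obtain ⟨r, hr, hr₀⟩ := exists_deriv_eq_zero hyz hg.continuousOn h₃
  exact ne_of_strictConvexOn_of_eq hg' (Set.mem_univ p) (Set.mem_univ r) (hp.2.trans hq.1)
    (hq.2.trans hr.1) (hp₀.trans hq₀.symm) (hq₀.trans hr₀.symm)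

theorem strictConvexOn_const_mul {E : Type*} [AddCommGroup E] [Module ℝ E] {s : Set E} {g : E → ℝ}
    {c : ℝ} (hc : 0 < c) (hg : StrictConvexOn ℝ s g) : StrictConvexOn ℝ s fun x ↦ c * g x := by
  refine ⟨hg.1, fun x hx y hy hxy p q hp hq hpq ↦ ?_⟩
  calc
    c * g (p • x + q • y) < c * (p • g x + q • g y) :=
      mul_lt_mul_of_pos_left (hg.2 hx hy hxy hp hq hpq) hc
    _ = p • (c * g x) + q • (c * g y) := by simp only [smul_eq_mul]; ring

theorem strictConvexOn_integral_comp_affine {φ u v w : ℝ → ℝ} {a b c : ℝ} (hab : a < b)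
    (hφ : StrictConvexOn ℝ Set.univ φ) (hu : Continuous u) (hv : Continuous v)
    (hw : Continuous w) (hw₀ : ∀ x ∈ Set.Icc a b, 0 ≤ w x) (hc : c ∈ Set.Icc a b) (hvc : v c ≠ 0)
    (hwc : 0 < w c) :
    StrictConvexOn ℝ Set.univ fun t ↦ ∫ x in a..b, φ (u x + t * v x) * w x := by
  have hφ_cont : Continuous φ := continuousOn_univ.1 (hφ.convexOn.continuousOn isOpen_univ)
  refine ⟨convex_univ, fun s _ t _ hst p q hp hq hpq ↦ ?_⟩
  have affine (x : ℝ) : u x + (p • s + q • t) * v x =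
      p • (u x + s * v x) + q • (u x + t * v x) := by
    simp only [smul_eq_mul]
    linear_combination -u x * hpq
  simp only [affine]
  rw [← intervalIntegral.integral_smul, ← intervalIntegral.integral_smul,
    ← intervalIntegral.integral_add (Continuous.intervalIntegrable (by fun_prop) _ _)
      (Continuous.intervalIntegrable (by fun_prop) _ _)]
  have distrib (x A B : ℝ) : p • (A * w x) + q • (B * w x) = (p • A + q • B) * w x := by
    simp only [smul_eq_mul]
    ring
  simp only [distrib]
  refine intervalIntegral.integral_lt_integral_of_continuousOn_of_le_of_exists_lt hab
    (by fun_prop) (by fun_prop) (fun x hx ↦ ?_) ⟨c, hc, ?_⟩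
  · exact mul_le_mul_of_nonneg_right
      (hφ.convexOn.2 (Set.mem_univ _) (Set.mem_univ _) hp.le hq.le hpq)
      (hw₀ x (Set.Ioc_subset_Icc_self hx))
  · refine mul_lt_mul_of_pos_right (hφ.2 (Set.mem_univ _) (Set.mem_univ _) ?_ hp hq hpq) hwc
    simpa [hvc] using hst

theorem hasDerivAt_integral_affine_pow {u v : ℝ → ℝ} (hu : Continuous u) (hv : Continuous v)
    (a b : ℝ) (n : ℕ) (t : ℝ) :
    HasDerivAt (fun t ↦ ∫ x in a..b, (u x + t * v x) ^ n)
      (n * ∫ x in a..b, (u x + t * v x) ^ (n - 1) * v x) t := by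
  rw [← intervalIntegral.integral_const_mul]
  refine (intervalIntegral.hasDerivAt_integral_of_dominated_loc_of_deriv_le
    (F' := fun s x ↦ n * ((u x + s * v x) ^ (n - 1) * v x))
    (bound := fun x ↦ n * ((|u x| + (|t| + 1) * |v x|) ^ (n - 1) * |v x|))
    (Metric.ball_mem_nhds t one_pos)
    (Eventually.of_forall fun s ↦ Continuous.aestronglyMeasurable (by fun_prop))
    (Continuous.intervalIntegrable (by fun_prop) _ _)
    (Continuous.aestronglyMeasurable (by fun_prop))
    (Eventually.of_forall fun x _ s hs ↦ ?_)
    (Continuous.intervalIntegrable (by fun_prop) _ _)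
    (Eventually.of_forall fun x _ s _ ↦ ?_)).2
  · have hs' : |s| ≤ |t| + 1 := by
      rw [Metric.mem_ball, Real.dist_eq] at hs
      linarith [abs_sub_abs_le_abs_sub s t]
    have hbase : |u x + s * v x| ≤ |u x| + (|t| + 1) * |v x| := by
      grw [abs_add_le, abs_mul, hs']
    rw [Real.norm_eq_abs, abs_mul, abs_mul, abs_pow, Nat.abs_cast]
    gcongr
  · have haffine : HasDerivAt (fun s ↦ u x + s * v x) (v x) s := by
      simpa using ((hasDerivAt_id s).mul_const (v x)).const_add (u x)
    simpa only [mul_assoc] using haffine.fun_pow n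

theorem integral_cos_pow_odd (k : ℕ) : ∫ x in (0 : ℝ)..π, cos x ^ (2 * k + 1) = 0 := by
  induction k with
  | zero => simp
  | succ k ih => rw [mul_add_one, add_right_comm, integral_cos_pow, ih]; simp

theorem integral_cos_pow_even (k : ℕ) :
    ∫ x in (0 : ℝ)..π, cos x ^ (2 * k) = π * (k.centralBinom / 4 ^ k) := by
  induction k with
  | zero => simp
  | succ k ih =>
    have hrec : ((k : ℝ) + 1) * (k + 1).centralBinom = 2 * (2 * k + 1) * k.centralBinom :=
      mod_cast k.succ_mul_centralBinom_succ
    rw [mul_add_one, integral_cos_pow, ih]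
    simp only [sin_pi, sin_zero, mul_zero, sub_zero, zero_div, zero_add]
    rw [pow_succ]
    push_cast
    field_simp
    linear_combination (-2) * hrec

theorem f_eq_integral (n : ℕ) (t : ℝ) :
    f n t = π⁻¹ * ∫ x in (0 : ℝ)..π, (cos x + t * (1 - cos x)) ^ n := by
  have hexpand (x : ℝ) : (cos x + t * (1 - cos x)) ^ n =
      ∑ m ∈ range (n + 1), ((1 - t) ^ m * t ^ (n - m) * n.choose m) * cos x ^ m := by
    rw [show cos x + t * (1 - cos x) = (1 - t) * cos x + t by ring, add_pow]
    refine sum_congr rfl fun m _ ↦ ?_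
    rw [mul_pow]
    ring
  simp only [hexpand]
  rw [intervalIntegral.integral_finsetSum
    fun m _ ↦ Continuous.intervalIntegrable (by fun_prop) _ _]
  simp only [intervalIntegral.integral_const_mul]
  rw [f, mul_sum]
  refine sum_of_injOn (2 * ·) (fun i _ j _ hij ↦ by simpa using hij)
    (fun k hk ↦ by simp only [coe_range, Set.mem_Iio] at hk ⊢; omega)
    (fun m hm hodd ↦ ?_) (fun k _ ↦ ?_)
  · obtain ⟨k, rfl | rfl⟩ := m.even_or_odd'
    · refine absurd ⟨k, ?_, rfl⟩ hodd
      simp only [mem_range, coe_range, Set.mem_Iio] at hm ⊢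
      omega
    · rw [integral_cos_pow_odd, mul_zero, mul_zero]
  · rw [integral_cos_pow_even, Nat.centralBinom_eq_two_mul_choose, div_pow, pow_mul 2 2 k,
      show (2 : ℝ) ^ 2 = 4 by norm_num]
    field_simp

theorem f_one (n : ℕ) : f n 1 = 1 := by
  simp [f_eq_integral, pi_ne_zero]

theorem f_zero_even (k : ℕ) : f (2 * k) 0 = k.centralBinom / 4 ^ k := by
  simp [f_eq_integral, integral_cos_pow_even, pi_ne_zero]

theorem f_zero_odd (k : ℕ) : f (2 * k + 1) 0 = 0 := by
  simp [f_eq_integral, integral_cos_pow_odd]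

theorem antitone_f {t : ℝ} (ht : 1 / 2 ≤ t) (ht' : t ≤ 1) : Antitone fun n ↦ f n t := by
  intro m n hmn
  simp only [f_eq_integral]
  gcongr
  refine intervalIntegral.integral_mono_on pi_pos.le
    (Continuous.intervalIntegrable (by fun_prop) _ _)
    (Continuous.intervalIntegrable (by fun_prop) _ _) fun x _ ↦ ?_
  apply pow_le_pow_of_le_one _ _ hmn <;> nlinarith [neg_one_le_cos x, cos_le_one x]

theorem hasDerivAt_f (n : ℕ) (t : ℝ) :
    HasDerivAt (f n)
      (π⁻¹ * (n * ∫ x in (0 : ℝ)..π, (cos x + t * (1 - cos x)) ^ (n - 1) * (1 - cos x))) t := by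
  rw [funext (f_eq_integral n)]
  exact (hasDerivAt_integral_affine_pow continuous_cos (by fun_prop) 0 π n t).const_mul _

theorem differentiable_f (n : ℕ) : Differentiable ℝ (f n) :=
  fun t ↦ (hasDerivAt_f n t).differentiableAt

theorem deriv_f (n : ℕ) :
    deriv (f n) = fun t ↦
      π⁻¹ * (n * ∫ x in (0 : ℝ)..π, (cos x + t * (1 - cos x)) ^ (n - 1) * (1 - cos x)) :=
  funext fun t ↦ (hasDerivAt_f n t).deriv

theorem deriv_f_zero_odd (k : ℕ) :
    deriv (f (2 * k + 1)) 0 = (2 * k + 1) * (k.centralBinom / 4 ^ k) := by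
  have hsplit :
      ∫ x in (0 : ℝ)..π, cos x ^ (2 * k) * (1 - cos x) = π * (k.centralBinom / 4 ^ k) := by
    simp only [mul_one_sub, ← pow_succ]
    rw [intervalIntegral.integral_sub (Continuous.intervalIntegrable (by fun_prop) _ _)
      (Continuous.intervalIntegrable (by fun_prop) _ _), integral_cos_pow_even,
      integral_cos_pow_odd, sub_zero]
  simp only [deriv_f, zero_mul, add_zero, Nat.add_sub_cancel, hsplit]
  push_cast
  field_simp

theorem strictConvexOn_integral_cos_affine_pow {n : ℕ} (hn : Even n) (hn₀ : n ≠ 0) (m : ℕ) :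
    StrictConvexOn ℝ Set.univ
      fun t ↦ ∫ x in (0 : ℝ)..π, (cos x + t * (1 - cos x)) ^ n * (1 - cos x) ^ m :=
  strictConvexOn_integral_comp_affine (c := π / 2) pi_pos (hn.strictConvexOn_pow hn₀)
    continuous_cos (by fun_prop) (by fun_prop)
    (fun x _ ↦ pow_nonneg (sub_nonneg.2 (cos_le_one x)) m)
    ⟨by positivity, by linarith [pi_pos]⟩ (by simp) (by simp)

theorem strictConvexOn_f {n : ℕ} (hn : Even n) (hn₀ : n ≠ 0) :
    StrictConvexOn ℝ Set.univ (f n) := by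
  rw [funext (f_eq_integral n)]
  simpa using strictConvexOn_const_mul (inv_pos.2 pi_pos)
    (strictConvexOn_integral_cos_affine_pow hn hn₀ 0)

theorem strictConvexOn_deriv_f {n : ℕ} (hn : Even n) (hn₀ : n ≠ 0) :
    StrictConvexOn ℝ Set.univ (deriv (f (n + 1))) := by
  rw [deriv_f]
  simpa [mul_assoc] using strictConvexOn_const_mul
    (show 0 < π⁻¹ * (n + 1 : ℕ) by positivity)
    (strictConvexOn_integral_cos_affine_pow hn hn₀ 1)

theorem not_lt_of_f_eq_self_even {n : ℕ} (hn : Even n) (hn₀ : n ≠ 0) {a b : ℝ} (hb : b < 1)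
    (hfa : f n a = a) (hfb : f n b = b) : ¬a < b := by
  intro hab
  have hconv : StrictConvexOn ℝ Set.univ fun t ↦ f n t - t :=
    (strictConvexOn_f hn hn₀).sub_concaveOn (concaveOn_id convex_univ)
  exact ne_of_strictConvexOn_of_eq hconv (Set.mem_univ a) (Set.mem_univ 1) hab hb
    (by simp [hfa, hfb]) (by simp [hfb, f_one])

theorem not_lt_of_f_eq_self_odd {k : ℕ} (hk : k ≠ 0) {a b : ℝ} (ha : 0 < a) (hb : b < 1)
    (hfa : f (2 * k + 1) a = a) (hfb : f (2 * k + 1) b = b) : ¬a < b := by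
  intro hab
  have hderiv : deriv (fun t ↦ f (2 * k + 1) t - t) = fun t ↦ deriv (f (2 * k + 1)) t + -1 :=
    funext fun t ↦ ((differentiable_f _ t).hasDerivAt.sub (hasDerivAt_id t)).deriv
  refine ne_of_strictConvexOn_deriv_of_eq (g := fun t ↦ f (2 * k + 1) t - t)
    ((differentiable_f _).continuous.sub continuous_id) ?_ ha hab hb
    (by simp [f_zero_odd, hfa]) (by simp [hfa, hfb]) (by simp [hfb, f_one])
  rw [hderiv]
  exact (strictConvexOn_deriv_f (even_two_mul k) (by positivity)).add_const (-1)

theorem not_lt_of_f_eq_self {n : ℕ} (hn : 2 ≤ n) {a b : ℝ} (ha : 0 < a) (hb : b < 1)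
    (hfa : f n a = a) (hfb : f n b = b) : ¬a < b := by
  obtain ⟨k, rfl | rfl⟩ := n.even_or_odd'
  · exact not_lt_of_f_eq_self_even (even_two_mul k) (by omega) hb hfa hfb
  · exact not_lt_of_f_eq_self_odd (by omega) ha hb hfa hfb

theorem f_one_half_lt {n : ℕ} (hn : 2 ≤ n) : f n (1 / 2) < 1 / 2 :=
  calc
    f n (1 / 2) ≤ f 2 (1 / 2) := antitone_f le_rfl (by norm_num) hn
    _ = 3 / 8 := by norm_num [f, sum_range_succ, Nat.choose]
    _ < 1 / 2 := by norm_num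

theorem eventually_lt_f_even (k : ℕ) : ∀ᶠ t in 𝓝[>] 0, t < f (2 * k) t := by
  have hpos : 0 < f (2 * k) 0 := by
    rw [f_zero_even]
    have := k.centralBinom_pos
    positivity
  exact nhdsWithin_le_nhds <|
    continuousAt_id.eventually_lt (differentiable_f _).continuous.continuousAt hpos

theorem one_lt_deriv_f_zero_odd {k : ℕ} (hk : 0 < k) : 1 < deriv (f (2 * k + 1)) 0 := by
  have hbinom : 4 ^ k < (2 * k + 1) * k.centralBinom := by
    linarith [k.four_pow_le_two_mul_self_mul_centralBinom hk, k.centralBinom_pos]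
  rw [deriv_f_zero_odd, ← mul_div_assoc, one_lt_div (by positivity)]
  exact_mod_cast hbinom

theorem eventually_lt_f_odd {k : ℕ} (hk : 0 < k) : ∀ᶠ t in 𝓝[>] 0, t < f (2 * k + 1) t := by
  have hslope := (differentiable_f (2 * k + 1) 0).hasDerivAt.tendsto_slope.mono_left
    (nhdsGT_le_nhdsNE 0)
  filter_upwards [hslope.eventually_const_lt (one_lt_deriv_f_zero_odd hk),
    self_mem_nhdsWithin] with t ht (ht₀ : 0 < t)
  rwa [slope_def_field, f_zero_odd, sub_zero, sub_zero, one_lt_div ht₀] at ht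

theorem eventually_lt_f {n : ℕ} (hn : 2 ≤ n) : ∀ᶠ t in 𝓝[>] 0, t < f n t := by
  obtain ⟨k, rfl | rfl⟩ := n.even_or_odd'
  · exact eventually_lt_f_even k
  · exact eventually_lt_f_odd (by omega)

theorem exists_f_eq_self {n : ℕ} (hn : 2 ≤ n) : ∃ α ∈ Set.Ioo (0 : ℝ) (1 / 2), f n α = α := by
  obtain ⟨s, hfs, hs⟩ :=
    ((eventually_lt_f hn).and (Ioo_mem_nhdsGT (by norm_num : (0 : ℝ) < 1 / 2))).exists
  obtain ⟨α, hα, hfα⟩ := intermediate_value_Ioo' (f := fun t ↦ f n t - t) hs.2.le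
    ((differentiable_f n).continuous.sub continuous_id).continuousOn
    ⟨sub_neg.2 (f_one_half_lt hn), sub_pos.2 hfs⟩
  exact ⟨α, ⟨hs.1.trans hα.1, hα.2⟩, sub_eq_zero.1 hfα⟩

theorem stmt_2 (n : ℕ) (hn : 2 ≤ n) :
    ∃ α : ℝ, α ∈ Set.Ioo (0 : ℝ) 1 ∧ f n α = α ∧ α < 1 / 2 ∧
      ∀ t ∈ Set.Ioo (0 : ℝ) 1, f n t = t → t = α := by
  obtain ⟨α, ⟨hα₀, hα⟩, hfα⟩ := exists_f_eq_self hn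
  have hα₁ : α < 1 := by linarith
  refine ⟨α, ⟨hα₀, hα₁⟩, hfα, hα, fun t ⟨ht₀, ht₁⟩ hft ↦ ?_⟩
  exact le_antisymm (not_lt.1 (not_lt_of_f_eq_self hn hα₀ ht₁ hfα hft))
    (not_lt.1 (not_lt_of_f_eq_self hn ht₀ hα₁ hft hfα))
end

section
/- For every integer n ≥ 536, one has 1/√(2π(n + 1/4)) < ξ_{4n} ≤ α_n, where ξ_{4n} = 2^{−4n}·C(4n,2n) and α_n is the unique fixed point of f_n in (0,1). -/
open Real Filter Finset

/-!
Let `N` be the number of successes in `n` trials of success probability `1 - t`, and write `ξ k` for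
`ξ_{2k}`. Then `f n t` is the expectation of `ξ (N / 2)` over the event that `N` is even. Wallis'
product gives `1 / √(π (k + 1/2)) < ξ k ≤ 1 / √(π k)`, and the convex function `x ↦ 1 / √x` lies
above its tangent line at `x = π n / 2`, which bounds `ξ k` below by an affine function of `k`. The
mass and the mean of `N` on the even numbers have closed forms, and with them `f n t ≥ 1 / √(2πn)`
as soon as `t` dominates `1 / n` and the parity error `(1 - 2t) ^ (n - 1)`. The point
`t = ξ (2n) ≤ 1 / √(2πn)` qualifies, so `t ≤ f n t`; since `f n (1/2) ≤ 1/2`, some fixed point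
lies in `[t, 1/2]`.
-/

section BinomialSums

variable {R : Type*} [CommRing R]

lemma two_mul_sum_range_two_mul (g : ℕ → R) (n : ℕ) :
    2 * ∑ k ∈ range (n / 2 + 1), g (2 * k) = ∑ j ∈ range (n + 1), (1 + (-1) ^ j) * g j := by
  induction n with
  | zero => simp [one_add_one_eq_two]
  | succ n ih =>
    rw [sum_range_succ _ (n + 1), ← ih]
    rcases Nat.even_or_odd' n with ⟨m, rfl | rfl⟩
    · have half_eq : (2 * m + 1) / 2 = 2 * m / 2 := by omega
      simp [half_eq, pow_succ, pow_mul]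
    · have half_eq : (2 * m + 1 + 1) / 2 = (2 * m + 1) / 2 + 1 := by omega
      have last_eq : 2 * ((2 * m + 1) / 2 + 1) = 2 * m + 1 + 1 := by omega
      rw [half_eq, sum_range_succ, last_eq]
      simp only [pow_succ, pow_mul]
      ring

lemma sum_range_mul_choose_mul_pow (x y : R) (n : ℕ) :
    ∑ j ∈ range (n + 1), (j : R) * (n.choose j * x ^ j * y ^ (n - j)) =
      n * x * (x + y) ^ (n - 1) := by
  cases n with
  | zero => simp
  | succ m =>
    rw [sum_range_succ', Nat.add_sub_cancel, add_pow, mul_sum, Nat.cast_zero, zero_mul, add_zero]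
    refine sum_congr rfl fun i _ => ?_
    have absorb : ((m : R) + 1) * m.choose i = (m + 1).choose (i + 1) * (i + 1) := by
      exact_mod_cast congrArg (Nat.cast (R := R)) (Nat.add_one_mul_choose_eq m i)
    rw [Nat.add_sub_add_right]
    push_cast
    linear_combination (-(x ^ (i + 1) * y ^ (m - i))) * absorb

lemma two_mul_sum_even_choose_mul_pow (x y : R) (n : ℕ) :
    2 * ∑ k ∈ range (n / 2 + 1), n.choose (2 * k) * x ^ (2 * k) * y ^ (n - 2 * k) =
      (x + y) ^ n + (-x + y) ^ n := by
  rw [two_mul_sum_range_two_mul (fun j => n.choose j * x ^ j * y ^ (n - j)), add_pow, add_pow,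
    ← sum_add_distrib]
  refine sum_congr rfl fun j _ => ?_
  rw [neg_pow x]
  ring

lemma two_mul_sum_even_mul_choose_mul_pow (x y : R) (n : ℕ) :
    2 * ∑ k ∈ range (n / 2 + 1),
        ((2 * k : ℕ) : R) * (n.choose (2 * k) * x ^ (2 * k) * y ^ (n - 2 * k)) =
      n * x * ((x + y) ^ (n - 1) - (-x + y) ^ (n - 1)) := by
  calc
    _ = ∑ j ∈ range (n + 1), (j : R) * (n.choose j * x ^ j * y ^ (n - j)) +
        ∑ j ∈ range (n + 1), (j : R) * (n.choose j * (-x) ^ j * y ^ (n - j)) := by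
      rw [two_mul_sum_range_two_mul (fun j => (j : R) * (n.choose j * x ^ j * y ^ (n - j))),
        ← sum_add_distrib]
      refine sum_congr rfl fun j _ => ?_
      rw [neg_pow x]
      ring
    _ = n * x * ((x + y) ^ (n - 1) - (-x + y) ^ (n - 1)) := by
      rw [sum_range_mul_choose_mul_pow, sum_range_mul_choose_mul_pow]
      ring

end BinomialSums

/-- The paper's `ξ_{2k} = 2^{-2k} C(2k, k)`, indexed by `k`: the probability that a simple random
walk is at its starting point after `2k` steps. -/
noncomputable def ξ (k : ℕ) : ℝ := k.centralBinom / 4 ^ k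

lemma ξ_pos (k : ℕ) : 0 < ξ k :=
  div_pos (mod_cast k.centralBinom_pos) (by positivity)

lemma ξ_le_one (k : ℕ) : ξ k ≤ 1 :=
  div_le_one_of_le₀ (mod_cast k.centralBinom_le_four_pow) (by positivity)

lemma ξ_two_mul (n : ℕ) : ξ (2 * n) = ((4 * n).choose (2 * n) : ℝ) / 2 ^ (4 * n) := by
  have pow_eq : (4 : ℝ) ^ (2 * n) = 2 ^ (4 * n) := by
    rw [show 4 * n = 2 * (2 * n) by ring, pow_mul 2 2]
    norm_num
  rw [ξ, Nat.centralBinom_eq_two_mul_choose, pow_eq,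
    show 2 * (2 * n) = 4 * n by ring]

lemma ξ_eq_one_div_sqrt_wallis (k : ℕ) : ξ k = 1 / √((2 * k + 1) * Wallis.W k) := by
  have factorial_eq : (k.centralBinom : ℝ) * (k.factorial * k.factorial) = (2 * k).factorial := by
    have h := Nat.choose_mul_factorial_mul_factorial (Nat.le_mul_of_pos_left k two_pos)
    rw [two_mul, Nat.add_sub_cancel, ← two_mul, ← Nat.centralBinom_eq_two_mul_choose,
      mul_assoc] at h
    exact_mod_cast h
  have pow_eq : (2 : ℝ) ^ (4 * k) = (4 ^ k) ^ 2 := by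
    rw [← pow_mul, mul_comm k, pow_mul, pow_mul]
    norm_num
  have radicand_eq : (2 * k + 1) * Wallis.W k = (1 / ξ k) ^ 2 := by
    have centralBinom_pos : (0 : ℝ) < k.centralBinom := mod_cast k.centralBinom_pos
    rw [Wallis.W_eq_factorial_ratio, ← factorial_eq, pow_eq, ξ]
    field_simp
  rw [radicand_eq, sqrt_sq (one_div_pos.2 (ξ_pos k)).le, one_div_one_div]

lemma wallis_lt_pi_div_two (k : ℕ) : Wallis.W k < π / 2 := by
  refine lt_of_lt_of_le ?_ (Wallis.W_le (k + 1))
  rw [Wallis.W_succ]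
  refine lt_mul_of_one_lt_right (Wallis.W_pos k) ?_
  rw [div_mul_div_comm, one_lt_div (by positivity)]
  linarith

lemma pi_mul_le_mul_wallis (k : ℕ) : π * k ≤ (2 * k + 1) * Wallis.W k := by
  calc
    π * k ≤ (2 * k + 1) * ((2 * k + 1) / (2 * k + 2) * (π / 2)) := by
      field_simp
      linarith
    _ ≤ (2 * k + 1) * Wallis.W k := by
      gcongr
      exact Wallis.le_W k

lemma one_div_sqrt_lt_ξ (k : ℕ) : 1 / √(π * (k + 1 / 2)) < ξ k := by
  rw [ξ_eq_one_div_sqrt_wallis]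
  have wallis_pos := Wallis.W_pos k
  refine one_div_lt_one_div_of_lt (by positivity) (sqrt_lt_sqrt (by positivity) ?_)
  calc
    (2 * k + 1) * Wallis.W k < (2 * k + 1) * (π / 2) := by
      gcongr
      exact wallis_lt_pi_div_two k
    _ = π * (k + 1 / 2) := by ring

lemma ξ_le_one_div_sqrt {k : ℕ} (hk : 0 < k) : ξ k ≤ 1 / √(π * k) := by
  rw [ξ_eq_one_div_sqrt_wallis]
  have radicand_pos : 0 < π * k := by positivity
  exact one_div_le_one_div_of_le (sqrt_pos.2 radicand_pos) (sqrt_le_sqrt (pi_mul_le_mul_wallis k))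

lemma tangent_le_one_div_sqrt {a x : ℝ} (ha : 0 < a) (hx : 0 < x) :
    (3 - x / a) / (2 * √a) ≤ 1 / √x := by
  obtain ⟨u, hu, rfl⟩ : ∃ u, 0 < u ∧ u ^ 2 = a := ⟨√a, sqrt_pos.2 ha, sq_sqrt ha.le⟩
  obtain ⟨v, hv, rfl⟩ : ∃ v, 0 < v ∧ v ^ 2 = x := ⟨√x, sqrt_pos.2 hx, sq_sqrt hx.le⟩
  rw [sqrt_sq hu.le, sqrt_sq hv.le]
  have cubic_nonneg : 0 ≤ (v - u) ^ 2 * (v + 2 * u) := by positivity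
  field_simp
  linarith

lemma tangent_le_ξ {n : ℕ} (hn : 0 < n) (k : ℕ) :
    1 / √(2 * π * n) * (3 - (2 * k + 1) / n) ≤ ξ k := by
  have two_mul_sqrt : 2 * √(π * n / 2) = √(2 * π * n) := by
    rw [← sqrt_sq zero_le_two, ← sqrt_mul (sq_nonneg 2), sqrt_sq zero_le_two]
    ring_nf
  have ratio_eq : π * (k + 1 / 2) / (π * n / 2) = (2 * k + 1) / n := by
    field_simp
  calc
    1 / √(2 * π * n) * (3 - (2 * k + 1) / n) =
        (3 - π * (k + 1 / 2) / (π * n / 2)) / (2 * √(π * n / 2)) := by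
      rw [two_mul_sqrt, ratio_eq]
      ring
    _ ≤ 1 / √(π * (k + 1 / 2)) := tangent_le_one_div_sqrt (by positivity) (by positivity)
    _ ≤ ξ k := (one_div_sqrt_lt_ξ k).le

/-- The probability that a binomial variable with `n` trials of success probability `1 - t` takes
the even value `2k`. -/
noncomputable def evenWeight (n : ℕ) (t : ℝ) (k : ℕ) : ℝ :=
  n.choose (2 * k) * (1 - t) ^ (2 * k) * t ^ (n - 2 * k)

lemma evenWeight_nonneg {t : ℝ} (ht : t ∈ Set.Icc 0 1) (n k : ℕ) : 0 ≤ evenWeight n t k := by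
  have failure_nonneg : 0 ≤ t := ht.1
  have success_nonneg : 0 ≤ 1 - t := sub_nonneg.2 ht.2
  unfold evenWeight
  positivity

lemma sum_evenWeight (n : ℕ) (t : ℝ) :
    ∑ k ∈ range (n / 2 + 1), evenWeight n t k = (1 + (2 * t - 1) ^ n) / 2 := by
  have h := two_mul_sum_even_choose_mul_pow (1 - t) t n
  rw [sub_add_cancel, one_pow, show -(1 - t) + t = 2 * t - 1 by ring] at h
  simp only [evenWeight]
  linarith

lemma sum_mul_evenWeight (n : ℕ) (t : ℝ) :
    ∑ k ∈ range (n / 2 + 1), ((2 * k : ℕ) : ℝ) * evenWeight n t k =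
      n * (1 - t) * (1 - (2 * t - 1) ^ (n - 1)) / 2 := by
  have h := two_mul_sum_even_mul_choose_mul_pow (1 - t) t n
  rw [sub_add_cancel, one_pow, show -(1 - t) + t = 2 * t - 1 by ring] at h
  simp only [evenWeight]
  linarith

lemma f_eq_sum_ξ_mul_evenWeight (n : ℕ) (t : ℝ) :
    f n t = ∑ k ∈ range (n / 2 + 1), ξ k * evenWeight n t k := by
  refine sum_congr rfl fun k _ => ?_
  rw [ξ, evenWeight, Nat.centralBinom_eq_two_mul_choose, div_pow, pow_mul 2 2,
    show (2 : ℝ) ^ 2 = 4 by norm_num]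
  ring

lemma continuous_f (n : ℕ) : Continuous (f n) := by
  unfold f
  fun_prop

lemma f_le_one_add_pow_div_two {t : ℝ} (ht : t ∈ Set.Icc 0 1) (n : ℕ) :
    f n t ≤ (1 + (2 * t - 1) ^ n) / 2 := by
  rw [f_eq_sum_ξ_mul_evenWeight, ← sum_evenWeight]
  exact sum_le_sum fun k _ => mul_le_of_le_one_left (evenWeight_nonneg ht n k) (ξ_le_one k)

lemma f_half_le_half {n : ℕ} (hn : n ≠ 0) : f n (1 / 2) ≤ 1 / 2 := by
  simpa [hn] using f_le_one_add_pow_div_two (t := 1 / 2) (by norm_num) n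

lemma one_div_sqrt_mul_le_f {t : ℝ} (ht : t ∈ Set.Icc 0 1) {n : ℕ} (hn : 0 < n) :
    1 / √(2 * π * n) * ((3 - 1 / n) * ((1 + (2 * t - 1) ^ n) / 2) -
      (1 - t) * (1 - (2 * t - 1) ^ (n - 1)) / 2) ≤ f n t := by
  set A := 1 / √(2 * π * n)
  calc
    _ = A * ((3 - 1 / n) * ∑ k ∈ range (n / 2 + 1), evenWeight n t k -
          1 / n * ∑ k ∈ range (n / 2 + 1), ((2 * k : ℕ) : ℝ) * evenWeight n t k) := by
      rw [sum_evenWeight, sum_mul_evenWeight]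
      field_simp
    _ = ∑ k ∈ range (n / 2 + 1), A * (3 - (2 * k + 1) / n) * evenWeight n t k := by
      rw [mul_sum, mul_sum, ← sum_sub_distrib, mul_sum]
      refine sum_congr rfl fun k _ => ?_
      push_cast
      ring
    _ ≤ ∑ k ∈ range (n / 2 + 1), ξ k * evenWeight n t k := by
      gcongr with k
      · exact evenWeight_nonneg ht n k
      · exact tangent_le_ξ hn k
    _ = f n t := (f_eq_sum_ξ_mul_evenWeight n t).symm

lemma one_div_sqrt_le_f {t : ℝ} (ht : t ∈ Set.Icc 0 (1 / 2)) {n : ℕ} (hn : 0 < n)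
    (h : 1 / n + 2 * (1 - 2 * t) ^ (n - 1) ≤ t) : 1 / √(2 * π * n) ≤ f n t := by
  obtain ⟨ht0, ht1⟩ := ht
  refine le_trans ?_ (one_div_sqrt_mul_le_f ⟨ht0, by linarith⟩ hn)
  refine le_mul_of_one_le_right (by positivity) ?_
  set v : ℝ := 1 / n
  set q := (2 * t - 1) ^ (n - 1) with hq
  have pow_eq : (2 * t - 1) ^ n = q * (2 * t - 1) := (pow_sub_one_mul hn.ne' _).symm
  have abs_q : |q| = (1 - 2 * t) ^ (n - 1) := by
    rw [hq, abs_pow, abs_of_nonpos (by linarith), neg_sub]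
  have v_nonneg : 0 ≤ v := by positivity
  have v_le_one : v ≤ 1 := (div_le_one (by positivity)).2 (mod_cast hn)
  have abs_coeff : |5 * t - 2 + v * (1 - 2 * t)| ≤ 2 := by
    rw [abs_le]
    constructor <;> nlinarith
  have parity_error : -(2 * |q|) ≤ q * (5 * t - 2 + v * (1 - 2 * t)) := by
    refine (abs_le.1 ?_).1
    rw [abs_mul, mul_comm 2 |q|]
    exact mul_le_mul_of_nonneg_left abs_coeff (abs_nonneg q)
  rw [← abs_q] at h
  rw [pow_eq]
  linarith

lemma mul_mul_one_sub_pow_le_exp_neg_one {x : ℝ} (hx : x ∈ Set.Icc 0 1) (n : ℕ) :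
    n * x * (1 - x) ^ n ≤ exp (-1) := by
  obtain ⟨hx0, hx1⟩ := hx
  calc
    n * x * (1 - x) ^ n ≤ n * x * exp (-x) ^ n := by
      gcongr
      exact one_sub_le_exp_neg x
    _ = n * x * exp (-(n * x)) := by rw [← exp_nat_mul, mul_neg]
    _ ≤ exp (-1) := mul_exp_neg_le_exp_neg_one _

lemma sq_mul_one_sub_two_mul_pow_le {t : ℝ} (ht : t ∈ Set.Icc 0 (1 / 2)) (m : ℕ) :
    (m * t) ^ 2 * (1 - 2 * t) ^ m ≤ 1 / 7 := by
  obtain ⟨ht0, ht1⟩ := ht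
  calc
    (m * t) ^ 2 * (1 - 2 * t) ^ m ≤ (m * t) ^ 2 * ((1 - t) ^ 2) ^ m := by
      gcongr
      · linarith
      · nlinarith
    _ = (m * t * (1 - t) ^ m) ^ 2 := by rw [pow_right_comm, ← mul_pow]
    _ ≤ exp (-1) ^ 2 := by
      have one_sub_nonneg : 0 ≤ 1 - t := by linarith
      gcongr
      exact mul_mul_one_sub_pow_le_exp_neg_one ⟨ht0, by linarith⟩ m
    _ ≤ 0.3678794412 ^ 2 := by
      gcongr
      exact exp_neg_one_lt_d9.le
    _ ≤ 1 / 7 := by norm_num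

-- The constant `7` exceeds `2π`, so that `t ~ 1 / √(2πn)` is covered, but not `e²`, so that the
-- power is at most `1 / n`; the threshold `63 = 7 * 3²` makes `n * t` at least `3`.
lemma one_div_add_two_mul_pow_le {t : ℝ} (ht : t ∈ Set.Icc 0 (1 / 2)) {n : ℕ} (hn : 63 ≤ n)
    (h : n ≤ 7 * ((n - 1 : ℕ) * t) ^ 2) : 1 / n + 2 * (1 - 2 * t) ^ (n - 1) ≤ t := by
  have n_ge : (63 : ℝ) ≤ n := mod_cast hn
  have pow_nonneg : 0 ≤ (1 - 2 * t) ^ (n - 1) := pow_nonneg (by linarith [ht.2]) _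
  have parity_error : n * (1 - 2 * t) ^ (n - 1) ≤ 1 := by
    calc
      n * (1 - 2 * t) ^ (n - 1) ≤ 7 * ((n - 1 : ℕ) * t) ^ 2 * (1 - 2 * t) ^ (n - 1) := by gcongr
      _ ≤ 1 := by linarith [sq_mul_one_sub_two_mul_pow_le ht (n - 1)]
  have three_le : 3 ≤ (n - 1 : ℕ) * t :=
    le_of_sq_le_sq (by linarith) (mul_nonneg (Nat.cast_nonneg _) ht.1)
  have mul_le : (n - 1 : ℕ) * t ≤ n * t := by
    gcongr
    · exact ht.1
    · exact n.sub_le 1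
  refine le_of_mul_le_mul_left ?_ (show (0 : ℝ) < n by linarith)
  rw [mul_add, mul_one_div_cancel (by linarith)]
  linarith

lemma one_div_sqrt_lt_ξ_two_mul (n : ℕ) : 1 / √(2 * π * (n + 1 / 4)) < ξ (2 * n) := by
  convert one_div_sqrt_lt_ξ (2 * n) using 3
  push_cast
  ring

lemma ξ_two_mul_le_one_div_sqrt {n : ℕ} (hn : 0 < n) : ξ (2 * n) ≤ 1 / √(2 * π * n) := by
  convert ξ_le_one_div_sqrt (k := 2 * n) (by omega) using 3
  push_cast
  ring

lemma ξ_two_mul_le_half {n : ℕ} (hn : 0 < n) : ξ (2 * n) ≤ 1 / 2 := by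
  refine (ξ_two_mul_le_one_div_sqrt hn).trans (one_div_le_one_div_of_le two_pos ?_)
  have one_le_n : (1 : ℝ) ≤ n := mod_cast hn
  exact le_sqrt_of_sq_le (by nlinarith [pi_gt_three])

lemma le_seven_mul_sq_ξ_two_mul {n : ℕ} (hn : 23 ≤ n) :
    n ≤ 7 * ((n - 1 : ℕ) * ξ (2 * n)) ^ 2 := by
  have n_ge : (23 : ℝ) ≤ n := mod_cast hn
  set c := 2 * π * (n + 1 / 4)
  have one_le : 1 ≤ c * ξ (2 * n) ^ 2 := by
    have h := pow_le_pow_left₀ (by positivity) (one_div_sqrt_lt_ξ_two_mul n).le 2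
    rwa [div_pow, one_pow, sq_sqrt (by positivity), div_le_iff₀' (by positivity)] at h
  have mul_le : n * c ≤ 7 * ((n - 1 : ℕ) : ℝ) ^ 2 := by
    rw [Nat.cast_pred (by omega)]
    calc
      n * c = π * (2 * n * (n + 1 / 4)) := by ring
      _ ≤ 3.15 * (2 * n * (n + 1 / 4)) := by
        gcongr
        exact pi_lt_d2.le
      _ ≤ 7 * (n - 1) ^ 2 := by nlinarith
  calc
    (n : ℝ) ≤ n * (c * ξ (2 * n) ^ 2) := le_mul_of_one_le_right n.cast_nonneg one_le
    _ = n * c * ξ (2 * n) ^ 2 := by ring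
    _ ≤ 7 * ((n - 1 : ℕ) : ℝ) ^ 2 * ξ (2 * n) ^ 2 := by gcongr
    _ = 7 * ((n - 1 : ℕ) * ξ (2 * n)) ^ 2 := by ring

lemma ξ_two_mul_le_f {n : ℕ} (hn : 63 ≤ n) : ξ (2 * n) ≤ f n (ξ (2 * n)) := by
  have ξ_mem : ξ (2 * n) ∈ Set.Icc 0 (1 / 2) := ⟨(ξ_pos _).le, ξ_two_mul_le_half (by omega)⟩
  calc
    ξ (2 * n) ≤ 1 / √(2 * π * n) := ξ_two_mul_le_one_div_sqrt (by omega)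
    _ ≤ f n (ξ (2 * n)) := one_div_sqrt_le_f ξ_mem (by omega)
      (one_div_add_two_mul_pow_le ξ_mem hn (le_seven_mul_sq_ξ_two_mul (by omega)))

theorem stmt_10_general (n : ℕ) (hn : 63 ≤ n) :
    1 / √(2 * π * (n + 1 / 4)) < ((4 * n).choose (2 * n) : ℝ) / 2 ^ (4 * n) ∧
      ∃ α ∈ Set.Ioo (0 : ℝ) 1, f n α = α ∧
        ((4 * n).choose (2 * n) : ℝ) / 2 ^ (4 * n) ≤ α := by
  rw [← ξ_two_mul]
  refine ⟨one_div_sqrt_lt_ξ_two_mul n, ?_⟩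
  obtain ⟨α, ⟨ξ_le_α, α_le_half⟩, α_fixed⟩ := exists_mem_Icc_isFixedPt
    (continuous_f n).continuousOn (ξ_two_mul_le_half (by omega)) (ξ_two_mul_le_f hn)
    (f_half_le_half (by omega))
  exact ⟨α, ⟨(ξ_pos _).trans_le ξ_le_α, by linarith⟩, α_fixed, ξ_le_α⟩

theorem stmt_10 (n : ℕ) (hn : 536 ≤ n) (α : ℝ)
    (hα : α ∈ Set.Ioo (0 : ℝ) 1) (hfix : f n α = α)
    (huniq : ∀ t ∈ Set.Ioo (0 : ℝ) 1, f n t = t → t = α) :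
    1 / Real.sqrt (2 * π * (n + 1 / 4)) < ((4 * n).choose (2 * n) : ℝ) / 2 ^ (4 * n) ∧
      ((4 * n).choose (2 * n) : ℝ) / 2 ^ (4 * n) ≤ α := by
  obtain ⟨one_div_sqrt_lt, x, hx, x_fixed, le_x⟩ := stmt_10_general n (by omega)
  exact ⟨one_div_sqrt_lt, huniq x hx x_fixed ▸ le_x⟩
end
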